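/- arXiv:1101.2718 — 2 statements merged into one kernel-verified Lean document; each statement's English description precedes it below -/
import Mathlib

section
/- Let a_1, …, a_n be positive integers and let p be the number of indices i with a_i odd. Then the nim-value of graph chomp on the complete n-partite graph K_{a_1,…,a_n} is the residue of p modulo 3: g(K_{a_1,…,a_n}) = p mod 3. -/
/-!
The heart of the argument is a symmetry principle (`grundy_eq_grundy_filter_swap`): if a family of
sets is invariant under interchanging `u` and `v`, and no member contains both, then deleting every
member that meets `{u, v}` does not change the nim-value. A move at a set `σ` meeting `{u, v}` can
be answered by the move at the swapped set, which restores the symmetry.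

Two vertices in the same part of a complete multipartite graph are interchangeable and nonadjacent,
so they can be removed; this preserves the parity of every part and reduces the problem to the
complete graph `K_p`. Deleting a vertex of `K_p` leaves `K_{p-1}`. Deleting an edge leaves a graph
in which its two ends are interchangeable and nonadjacent, so its value is that of `K_{p-2}`. Hence
`g(K_p) = mex {g(K_{p-1}), g(K_{p-2})}` for `p ≥ 2`, with `g(K_0) = 0` and `g(K_1) = 1`, and this
recursion yields `p mod 3`.
-/

attribute [local instance] Classical.propDecidable

/-- The minimal excludant of a finite set of naturals. -/
noncomputable def mex (s : Finset ℕ) : ℕ := sInf {n : ℕ | n ∉ s}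

/-- The position resulting from choosing `σ` in subset take-away:
remove `σ` together with every element containing it. -/
noncomputable def takeawayMove {V : Type*} [DecidableEq V] (Δ : Finset (Finset V))
    (σ : Finset V) : Finset (Finset V) :=
  Δ.filter (fun t => ¬ σ ⊆ t)

/-- The Grundy (nim-)value of subset take-away played on `Δ`: the minimal excludant of the
Grundy values of all positions reachable in one move. -/
noncomputable def grundy {V : Type*} [DecidableEq V] (Δ : Finset (Finset V)) : ℕ :=
  mex (Δ.attach.image (fun σ => grundy (takeawayMove Δ σ.1)))
termination_by Δ.card
decreasing_by
  simp only [takeawayMove]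
  exact Finset.card_lt_card (Finset.filter_ssubset.mpr ⟨σ.1, σ.2, by simp⟩)

/-- The simplicial complex of vertices and edges of a finite simple graph `G`.
Graph chomp on `G` is subset take-away on this complex, so the nim-value of graph chomp
on `G` is `grundy (graphComplex G)`. -/
noncomputable def graphComplex {V : Type*} [Fintype V] [DecidableEq V] (G : SimpleGraph V) :
    Finset (Finset V) :=
  (Finset.univ : Finset V).image (fun v => ({v} : Finset V)) ∪
    Finset.univ.filter (fun s : Finset V => ∃ u v, G.Adj u v ∧ s = {u, v})

/-! ### Nim-values through options -/

section Grundy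

variable {V : Type*} [DecidableEq V]

theorem mex_notMem (s : Finset ℕ) : mex s ∉ s :=
  Nat.sInf_mem (s := {n : ℕ | n ∉ s}) (Infinite.exists_notMem_finset s)

theorem mem_of_lt_mex {s : Finset ℕ} {k : ℕ} (h : k < mex s) : k ∈ s := by
  by_contra hk
  exact Nat.notMem_of_lt_sInf h hk

theorem grundy_move_ne {Δ : Finset (Finset V)} {σ : Finset V} (h : σ ∈ Δ) :
    grundy (takeawayMove Δ σ) ≠ grundy Δ := by
  intro he
  apply mex_notMem (Δ.attach.image (fun σ => grundy (takeawayMove Δ σ.1)))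
  rw [← grundy, ← he]
  exact Finset.mem_image.2 ⟨⟨σ, h⟩, Finset.mem_attach _ _, rfl⟩

theorem exists_move_of_lt_grundy {Δ : Finset (Finset V)} {k : ℕ} (h : k < grundy Δ) :
    ∃ σ ∈ Δ, grundy (takeawayMove Δ σ) = k := by
  rw [grundy] at h
  obtain ⟨σ, -, hσ⟩ := Finset.mem_image.1 (mem_of_lt_mex h)
  exact ⟨σ.1, σ.2, hσ⟩

theorem grundy_eq_of_moves {Δ : Finset (Finset V)} {k : ℕ}
    (h₁ : ∀ σ ∈ Δ, grundy (takeawayMove Δ σ) ≠ k)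
    (h₂ : ∀ m < k, ∃ σ ∈ Δ, grundy (takeawayMove Δ σ) = m) : grundy Δ = k := by
  rcases lt_trichotomy (grundy Δ) k with h | h | h
  · obtain ⟨σ, hσ, he⟩ := h₂ _ h
    exact absurd he (grundy_move_ne hσ)
  · exact h
  · obtain ⟨σ, hσ, he⟩ := exists_move_of_lt_grundy h
    exact absurd he (h₁ σ hσ)

theorem mem_takeawayMove {Δ : Finset (Finset V)} {σ t : Finset V} :
    t ∈ takeawayMove Δ σ ↔ t ∈ Δ ∧ ¬ σ ⊆ t := by
  simp [takeawayMove]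

theorem card_takeawayMove_lt {Δ : Finset (Finset V)} {σ : Finset V} (h : σ ∈ Δ) :
    (takeawayMove Δ σ).card < Δ.card :=
  Finset.card_lt_card (Finset.filter_ssubset.mpr ⟨σ, h, by simp⟩)

/-! ### The symmetry principle -/

/-- The image of `t` under the transposition of `u` and `v`. -/
def swapSet (u v : V) (t : Finset V) : Finset V := t.map (Equiv.swap u v).toEmbedding

theorem mem_swapSet {u v x : V} {t : Finset V} :
    x ∈ swapSet u v t ↔ Equiv.swap u v x ∈ t := by
  rw [swapSet, Finset.mem_map_equiv, Equiv.symm_swap]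

theorem swapSet_swapSet (u v : V) (t : Finset V) : swapSet u v (swapSet u v t) = t := by
  ext x; simp [mem_swapSet]

theorem swapSet_subset_swapSet {u v : V} {s t : Finset V} :
    swapSet u v s ⊆ swapSet u v t ↔ s ⊆ t :=
  Finset.map_subset_map

theorem subset_swapSet_iff {u v : V} {s t : Finset V} :
    s ⊆ swapSet u v t ↔ swapSet u v s ⊆ t := by
  rw [← swapSet_subset_swapSet (u := u) (v := v), swapSet_swapSet]

theorem swapSet_eq_self {u v : V} {t : Finset V} (hu : u ∉ t) (hv : v ∉ t) :
    swapSet u v t = t := by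
  ext x
  rw [mem_swapSet]
  rcases eq_or_ne x u with rfl | hxu
  · simp [hu, hv]
  rcases eq_or_ne x v with rfl | hxv
  · simp [hu, hv]
  rw [Equiv.swap_apply_of_ne_of_ne hxu hxv]

/-- A set that meets `{u, v}` in exactly one point is not contained in its swapped copy. -/
theorem not_subset_swapSet {u v : V} {t : Finset V} (h : ¬ (u ∉ t ∧ v ∉ t))
    (h' : ¬ (u ∈ t ∧ v ∈ t)) : ¬ t ⊆ swapSet u v t := by
  intro hs
  have hu := @hs u
  have hv := @hs v
  simp only [mem_swapSet, Equiv.swap_apply_left, Equiv.swap_apply_right] at hu hv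
  tauto

/-- Symmetry principle: interchangeable elements `u`, `v` that lie in no common member may be
discarded. The reply to a move at `σ` that meets `{u, v}` is the move at `swapSet u v σ`. -/
theorem grundy_eq_grundy_filter_swap (u v : V) (Δ : Finset (Finset V))
    (hinv : ∀ t ∈ Δ, swapSet u v t ∈ Δ) (hno : ∀ t ∈ Δ, ¬ (u ∈ t ∧ v ∈ t)) :
    grundy Δ = grundy (Δ.filter (fun t => u ∉ t ∧ v ∉ t)) := by
  induction hc : Δ.card using Nat.strong_induction_on generalizing Δ with
  | _ c ih =>
  subst hc
  -- Moves at sets avoiding `u` and `v` have the same value in both families.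
  have hfix : ∀ σ ∈ Δ, u ∉ σ → v ∉ σ → grundy (takeawayMove Δ σ) =
      grundy (takeawayMove (Δ.filter (fun t => u ∉ t ∧ v ∉ t)) σ) := by
    intro σ hσ hu hv
    rw [ih _ (card_takeawayMove_lt hσ) (takeawayMove Δ σ) ?_ ?_ rfl]
    · congr 1
      ext t
      simp only [Finset.mem_filter, mem_takeawayMove]
      tauto
    · intro t ht
      rw [mem_takeawayMove] at ht ⊢
      refine ⟨hinv t ht.1, ?_⟩
      rw [subset_swapSet_iff, swapSet_eq_self hu hv]
      exact ht.2
    · exact fun t ht => hno t (mem_takeawayMove.1 ht).1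
  apply grundy_eq_of_moves
  · intro σ hσ
    by_cases h : u ∉ σ ∧ v ∉ σ
    · rw [hfix σ hσ h.1 h.2]
      exact grundy_move_ne (Finset.mem_filter.2 ⟨hσ, h⟩)
    · have hτ : swapSet u v σ ∈ takeawayMove Δ σ :=
        mem_takeawayMove.2 ⟨hinv σ hσ, not_subset_swapSet h (hno σ hσ)⟩
      have hlt := (card_takeawayMove_lt hτ).trans (card_takeawayMove_lt hσ)
      have key := ih _ hlt (takeawayMove (takeawayMove Δ σ) (swapSet u v σ)) ?_ ?_ rfl
      · have hF : (takeawayMove (takeawayMove Δ σ) (swapSet u v σ)).filter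
            (fun t => u ∉ t ∧ v ∉ t) = Δ.filter (fun t => u ∉ t ∧ v ∉ t) := by
          ext t
          simp only [Finset.mem_filter, mem_takeawayMove]
          refine ⟨fun ht => ⟨ht.1.1.1, ht.2⟩, fun ht => ?_⟩
          have hσt : ¬ σ ⊆ t := fun hs => h ⟨fun hu => ht.2.1 (hs hu), fun hv => ht.2.2 (hs hv)⟩
          refine ⟨⟨⟨ht.1, hσt⟩, ?_⟩, ht.2⟩
          rwa [← subset_swapSet_iff, swapSet_eq_self ht.2.1 ht.2.2]
        rw [hF] at key
        rw [← key]
        exact (grundy_move_ne hτ).symm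
      · intro t ht
        simp only [mem_takeawayMove] at ht ⊢
        refine ⟨⟨hinv t ht.1.1, ?_⟩, ?_⟩
        · rw [subset_swapSet_iff]; exact ht.2
        · rw [swapSet_subset_swapSet]; exact ht.1.2
      · exact fun t ht => hno t (mem_takeawayMove.1 (mem_takeawayMove.1 ht).1).1
  · intro m hm
    obtain ⟨σ, hσ, he⟩ := exists_move_of_lt_grundy hm
    rw [Finset.mem_filter] at hσ
    exact ⟨σ, hσ.1, by rw [hfix σ hσ.1 hσ.2.1 hσ.2.2, he]⟩

/-! ### Complete multipartite graphs -/

/-- The vertices and edges of the complete multipartite graph on the vertex set `s` whose parts are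
the fibres of `f`: the subsets of `s` with one or two elements on which `f` is injective. -/
noncomputable def multipartiteComplex {ι : Type*} (f : V → ι) (s : Finset V) :
    Finset (Finset V) :=
  s.powerset.filter (fun t => t.Nonempty ∧ t.card ≤ 2 ∧ Set.InjOn f t)

variable {ι : Type*} {f : V → ι} {s : Finset V}

theorem mem_multipartiteComplex {t : Finset V} : t ∈ multipartiteComplex f s ↔
    t ⊆ s ∧ t.Nonempty ∧ t.card ≤ 2 ∧ Set.InjOn f t := by
  simp [multipartiteComplex]

theorem swapSet_subset_of_mem {u v : V} {t : Finset V} (hu : u ∈ s) (hv : v ∈ s) (ht : t ⊆ s) :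
    swapSet u v t ⊆ s := by
  intro x hx
  rw [mem_swapSet] at hx
  rcases eq_or_ne x u with rfl | hxu
  · exact hu
  rcases eq_or_ne x v with rfl | hxv
  · exact hv
  rw [Equiv.swap_apply_of_ne_of_ne hxu hxv] at hx
  exact ht hx

theorem subset_sdiff_pair_iff {u v : V} {t : Finset V} :
    t ⊆ s \ {u, v} ↔ t ⊆ s ∧ u ∉ t ∧ v ∉ t := by
  rw [Finset.subset_sdiff, Finset.disjoint_insert_right, Finset.disjoint_singleton_right]

theorem card_swapSet (u v : V) (t : Finset V) : (swapSet u v t).card = t.card :=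
  Finset.card_map _

theorem swapSet_nonempty {u v : V} {t : Finset V} (h : t.Nonempty) : (swapSet u v t).Nonempty :=
  h.map

/-- Two vertices in the same part may be discarded. -/
theorem grundy_multipartite_same {u v : V} (hu : u ∈ s) (hv : v ∈ s) (huv : u ≠ v)
    (hf : f u = f v) :
    grundy (multipartiteComplex f s) = grundy (multipartiteComplex f (s \ {u, v})) := by
  rw [grundy_eq_grundy_filter_swap u v]
  · congr 1
    ext t
    simp only [Finset.mem_filter, mem_multipartiteComplex, subset_sdiff_pair_iff]
    tauto
  · intro t ht
    rw [mem_multipartiteComplex] at ht ⊢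
    refine ⟨swapSet_subset_of_mem hu hv ht.1, swapSet_nonempty ht.2.1,
      (card_swapSet u v t).trans_le ht.2.2.1, ?_⟩
    have hfs : ∀ x, f (Equiv.swap u v x) = f x := by
      intro x
      rcases eq_or_ne x u with rfl | hxu
      · simp [hf]
      rcases eq_or_ne x v with rfl | hxv
      · simp [hf]
      rw [Equiv.swap_apply_of_ne_of_ne hxu hxv]
    intro x hx y hy hxy
    rw [Finset.mem_coe, mem_swapSet] at hx hy
    exact (Equiv.swap u v).injective (ht.2.2.2 hx hy (by rw [hfs, hfs, hxy]))
  · intro t ht h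
    exact huv ((mem_multipartiteComplex.1 ht).2.2.2 h.1 h.2 hf)

theorem takeawayMove_singleton (v : V) :
    takeawayMove (multipartiteComplex f s) {v} = multipartiteComplex f (s.erase v) := by
  ext t
  simp only [mem_takeawayMove, mem_multipartiteComplex, Finset.singleton_subset_iff,
    Finset.subset_erase]
  tauto

/-- In a complete graph, deleting the edge `{u, v}` has the same value as deleting both ends,
since `u` and `v` become interchangeable and nonadjacent. -/
theorem grundy_takeawayMove_pair (hinj : Set.InjOn f s) {u v : V} (hu : u ∈ s) (hv : v ∈ s) :
    grundy (takeawayMove (multipartiteComplex f s) {u, v}) =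
      grundy (multipartiteComplex f (s \ {u, v})) := by
  rw [grundy_eq_grundy_filter_swap u v]
  · congr 1
    ext t
    simp only [Finset.mem_filter, mem_takeawayMove, mem_multipartiteComplex,
      subset_sdiff_pair_iff, Finset.insert_subset_iff, Finset.singleton_subset_iff]
    tauto
  · intro t ht
    simp only [mem_takeawayMove, mem_multipartiteComplex, Finset.insert_subset_iff,
      Finset.singleton_subset_iff] at ht ⊢
    have hsub := swapSet_subset_of_mem hu hv ht.1.1
    refine ⟨⟨hsub, swapSet_nonempty ht.1.2.1, (card_swapSet u v t).trans_le ht.1.2.2.1,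
      hinj.mono (Finset.coe_subset.2 hsub)⟩, ?_⟩
    simp only [mem_swapSet, Equiv.swap_apply_left, Equiv.swap_apply_right]
    tauto
  · intro t ht
    simpa [Finset.insert_subset_iff] using (mem_takeawayMove.1 ht).2

theorem grundy_complete (hinj : Set.InjOn f s) :
    grundy (multipartiteComplex f s) = s.card % 3 := by
  induction hc : s.card using Nat.strong_induction_on generalizing s with
  | _ c ih =>
  subst hc
  have hvert : ∀ v ∈ s, grundy (takeawayMove (multipartiteComplex f s) {v}) =
      (s.card - 1) % 3 := by
    intro v hv
    rw [takeawayMove_singleton, ← Finset.card_erase_of_mem hv]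
    exact ih _ (Finset.card_erase_lt_of_mem hv)
      (hinj.mono (Finset.coe_subset.2 (Finset.erase_subset _ _))) rfl
  have hedge : ∀ u ∈ s, ∀ v ∈ s, u ≠ v →
      grundy (takeawayMove (multipartiteComplex f s) {u, v}) = (s.card - 2) % 3 := by
    intro u hu v hv huv
    have hsub : ({u, v} : Finset V) ⊆ s := by simp [Finset.insert_subset_iff, hu, hv]
    have hle := Finset.card_le_card hsub
    have hcard := Finset.card_sdiff_of_subset hsub
    rw [Finset.card_pair huv] at hcard hle
    rw [grundy_takeawayMove_pair hinj hu hv, ← hcard]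
    exact ih _ (by omega) (hinj.mono (Finset.coe_subset.2 Finset.sdiff_subset)) rfl
  apply grundy_eq_of_moves
  · intro σ hσ
    obtain ⟨hsub, hne, hle, -⟩ := mem_multipartiteComplex.1 hσ
    have hpos := hne.card_pos
    have hcs := Finset.card_le_card hsub
    obtain h | h : σ.card = 1 ∨ σ.card = 2 := by omega
    · obtain ⟨v, rfl⟩ := Finset.card_eq_one.1 h
      rw [hvert v (by simpa using hsub)]
      omega
    · obtain ⟨u, v, huv, rfl⟩ := Finset.card_eq_two.1 h
      rw [hedge u (hsub (by simp)) v (hsub (by simp)) huv]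
      omega
  · intro m hm
    -- Here `m < card % 3 ≤ 2`, so either `m = card % 3 - 1` or `m = card % 3 - 2`.
    obtain h | ⟨h, h2⟩ : m = (s.card - 1) % 3 ∨ m = (s.card - 2) % 3 ∧ 1 < s.card := by omega
    · obtain ⟨v, hv⟩ := Finset.card_pos.1 (show 0 < s.card by omega)
      refine ⟨{v}, ?_, (hvert v hv).trans h.symm⟩
      simp [mem_multipartiteComplex, hv]
    · obtain ⟨u, hu, v, hv, huv⟩ := Finset.one_lt_card.1 h2
      have hsub : ({u, v} : Finset V) ⊆ s := by simp [Finset.insert_subset_iff, hu, hv]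
      exact ⟨{u, v}, mem_multipartiteComplex.2 ⟨hsub, by simp, Finset.card_le_two,
        hinj.mono (Finset.coe_subset.2 hsub)⟩, (hedge u hu v hv huv).trans h.symm⟩

theorem grundy_multipartite [Fintype ι] (f : V → ι) (s : Finset V) :
    grundy (multipartiteComplex f s) =
      (Finset.univ.filter (fun i => Odd (s.filter (fun x => f x = i)).card)).card % 3 := by
  induction hc : s.card using Nat.strong_induction_on generalizing s with
  | _ c ih =>
  subst hc
  by_cases hinj : Set.InjOn f s
  · rw [grundy_complete hinj]
    congr 1
    rw [← Finset.card_image_of_injOn hinj]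
    congr 1
    ext i
    have hle : (s.filter (fun x => f x = i)).card ≤ 1 := by
      rw [Finset.card_le_one]
      intro x hx y hy
      rw [Finset.mem_filter] at hx hy
      exact hinj hx.1 hy.1 (hx.2.trans hy.2.symm)
    have hodd : Odd (s.filter (fun x => f x = i)).card ↔
        0 < (s.filter (fun x => f x = i)).card := by
      rw [Nat.odd_iff]; omega
    rw [Finset.mem_filter, hodd, Finset.card_pos]
    simp [Finset.Nonempty]
  · simp only [Set.InjOn, Finset.mem_coe] at hinj
    push Not at hinj
    obtain ⟨u, hu, v, hv, hf, huv⟩ := hinj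
    have hsub : ({u, v} : Finset V) ⊆ s := by simp [Finset.insert_subset_iff, hu, hv]
    rw [grundy_multipartite_same hu hv huv hf, ih _ ?_ (s \ {u, v}) rfl]
    · congr 2
      ext i
      simp only [Finset.mem_filter, Finset.mem_univ, true_and]
      by_cases hi : f u = i
      · have hsub' : ({u, v} : Finset V) ⊆ s.filter (fun x => f x = i) := by
          simp [Finset.insert_subset_iff, hu, hv, hi, ← hf]
        have hset : (s \ {u, v}).filter (fun x => f x = i) =
            s.filter (fun x => f x = i) \ {u, v} := by
          ext x; simp only [Finset.mem_filter, Finset.mem_sdiff]; tauto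
        have hle := Finset.card_le_card hsub'
        rw [hset, Finset.card_sdiff_of_subset hsub']
        rw [Finset.card_pair huv] at hle ⊢
        rw [Nat.odd_iff, Nat.odd_iff]
        omega
      · have hset : (s \ {u, v}).filter (fun x => f x = i) = s.filter (fun x => f x = i) := by
          ext x
          simp only [Finset.mem_filter, Finset.mem_sdiff, Finset.mem_insert,
            Finset.mem_singleton]
          refine ⟨fun h => ⟨h.1.1, h.2⟩, fun h => ⟨⟨h.1, ?_⟩, h.2⟩⟩
          rintro (rfl | rfl)
          · exact hi h.2
          · exact hi (hf.trans h.2)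
        rw [hset]
    · exact Finset.card_lt_card (Finset.sdiff_ssubset hsub ⟨u, by simp⟩)

end Grundy

theorem graphComplex_completeMultipartite {n : ℕ} (a : Fin n → ℕ)
    [DecidableEq (Σ i : Fin n, Fin (a i))] :
    graphComplex (SimpleGraph.completeMultipartiteGraph (fun i : Fin n => Fin (a i))) =
      multipartiteComplex Sigma.fst Finset.univ := by
  ext t
  simp only [graphComplex, Finset.mem_union, Finset.mem_image, Finset.mem_filter,
    Finset.mem_univ, true_and, mem_multipartiteComplex, Finset.subset_univ]
  constructor
  · rintro (⟨v, rfl⟩ | ⟨u, v, huv, rfl⟩)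
    · simp
    · have huv' : u.1 ≠ v.1 := huv
      refine ⟨by simp, Finset.card_le_two, ?_⟩
      rw [Finset.coe_pair, Set.injOn_pair]
      exact fun h => absurd h huv'
  · rintro ⟨hne, hle, hinj⟩
    have hpos := hne.card_pos
    obtain h | h : t.card = 1 ∨ t.card = 2 := by omega
    · obtain ⟨v, rfl⟩ := Finset.card_eq_one.1 h
      exact Or.inl ⟨v, rfl⟩
    · obtain ⟨u, v, huv, rfl⟩ := Finset.card_eq_two.1 h
      refine Or.inr ⟨u, v, ?_, rfl⟩
      change u.1 ≠ v.1
      exact fun h => huv (hinj (by simp) (by simp) h)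

/-- The nim-value of graph chomp on the complete `n`-partite graph
`K_{a_1,…,a_n}` is `p mod 3`, where `p` is the number of parts of odd size. -/
theorem grundy_completeMultipartite (n : ℕ) (a : Fin n → ℕ) (ha : ∀ i, 0 < a i) :
    grundy (graphComplex
        (SimpleGraph.completeMultipartiteGraph (fun i : Fin n => Fin (a i)))) =
      (Finset.univ.filter (fun i : Fin n => Odd (a i))).card % 3 := by
  rw [graphComplex_completeMultipartite, grundy_multipartite]
  have hfib : ∀ i : Fin n, (Finset.univ.filter
      (fun x : Σ i : Fin n, Fin (a i) => x.1 = i)).card = a i := by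
    intro i
    have : Finset.univ.filter (fun x : Σ i : Fin n, Fin (a i) => x.1 = i) =
        Finset.univ.map (Function.Embedding.sigmaMk (β := fun i => Fin (a i)) i) := by
      ext ⟨j, y⟩
      simp only [Finset.mem_filter, Finset.mem_univ, true_and, Finset.mem_map,
        Function.Embedding.sigmaMk_apply]
      constructor
      · rintro rfl
        exact ⟨y, rfl⟩
      · rintro ⟨z, hz⟩
        exact (congrArg Sigma.fst hz).symm
    rw [this, Finset.card_map, Finset.card_univ, Fintype.card_fin]
  congr 2
  ext i
  simp only [Finset.mem_filter, Finset.mem_univ, true_and]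
  -- The two filters differ only in their decidability instances.
  exact iff_of_eq (congrArg Odd (Eq.trans (by congr) (hfib i)))
end

section
/- Let G be a forest with v(G) vertices and c(G) connected components. If c(G) is even then the nim-value of graph chomp on G is 0 if v(G) is even and 3 if v(G) is odd; if c(G) is odd then g(G) is 2 if v(G) is even and 1 if v(G) is odd. -/
/-!
The nim-value depends only on the parities of the numbers `v` of vertices and `e` of edges: it is
`v % 2 + 2 * (e % 2)`, and this holds for every bipartite graph. Deleting an edge changes the parity
of `e` only, and deleting a vertex changes the parity of `v`, so no move preserves both parities.
It remains to see that all smaller values are reachable.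

* If `e` is odd, there is an edge to delete, which changes the value by `2`.
* If `v` is odd, some vertex has even degree, because the degrees add up to `2 * e`; deleting it
  changes the parity of `v` only.
* If `e` is odd, some vertex has odd degree, because the degrees over one colour class add up to
  `e`; deleting it changes both parities.

Both sums are instances of the double count `sum_deg`, and `grundy_eq` is the resulting formula.
A forest is bipartite and satisfies `e + c = v` (`card_edges_add_card_components`), which turns the
parity of `e` into that of `c`.
-/

attribute [local instance] Classical.propDecidable

/-! ### Subset take-away on a bipartite complex -/

section Complex

variable {V : Type*} [DecidableEq V]

/-- The number of elements of `Δ` with `k` points: the vertices for `k = 1`, the edges for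
`k = 2`. -/
noncomputable def level (Δ : Finset (Finset V)) (k : ℕ) : ℕ := (Δ.filter (fun t => t.card = k)).card

/-- The number of `k`-point elements of `Δ` containing `σ`. For a vertex `σ` and `k = 2` this is
the degree of `σ`. -/
noncomputable def numAbove (Δ : Finset (Finset V)) (k : ℕ) (σ : Finset V) : ℕ :=
  (Δ.filter (fun t => t.card = k ∧ σ ⊆ t)).card

/-- `Δ` is the complex of vertices and edges of a graph in which every edge has exactly one end
in `C`. -/
structure IsBipartiteComplex (C : Finset V) (Δ : Finset (Finset V)) : Prop where
  card : ∀ t ∈ Δ, t.card = 1 ∨ t.card = 2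
  down : ∀ t ∈ Δ, ∀ s ⊆ t, s.Nonempty → s ∈ Δ
  color : ∀ t ∈ Δ, t.card = 2 → (t ∩ C).card = 1

lemma mex_eq {s : Finset ℕ} {n : ℕ} (h : n ∉ s) (h' : ∀ m < n, m ∈ s) : mex s = n := by
  apply le_antisymm (Nat.sInf_le h)
  by_contra hlt
  exact Nat.sInf_mem (s := {n : ℕ | n ∉ s}) ⟨n, h⟩ (h' _ (not_le.mp hlt))

lemma IsBipartiteComplex.takeawayMove {C : Finset V} {Δ : Finset (Finset V)}
    (h : IsBipartiteComplex C Δ) (σ : Finset V) : IsBipartiteComplex C (takeawayMove Δ σ) := by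
  refine ⟨fun t ht => h.card t ?_, fun t ht s hs hne => ?_, fun t ht => h.color t ?_⟩
  · exact (Finset.mem_filter.mp ht).1
  · obtain ⟨h1, h2⟩ := Finset.mem_filter.mp ht
    exact Finset.mem_filter.mpr ⟨h.down t h1 s hs hne, fun h3 => h2 (h3.trans hs)⟩
  · exact (Finset.mem_filter.mp ht).1

lemma level_takeawayMove (Δ : Finset (Finset V)) (k : ℕ) (σ : Finset V) :
    level (takeawayMove Δ σ) k + numAbove Δ k σ = level Δ k := by
  unfold level numAbove takeawayMove
  rw [← Finset.card_filter_add_card_filter_not (s := Δ.filter (fun t => t.card = k))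
    (fun t => σ ⊆ t), add_comm, Finset.filter_filter, Finset.filter_filter, Finset.filter_filter]
  congr 2
  ext t
  simp only [Finset.mem_filter]
  tauto

lemma numAbove_self {Δ : Finset (Finset V)} {k : ℕ} {σ : Finset V} (hσ : σ ∈ Δ) (hk : σ.card = k) :
    numAbove Δ k σ = 1 := by
  unfold numAbove
  rw [Finset.card_eq_one]
  refine ⟨σ, ?_⟩
  ext t
  simp only [Finset.mem_filter, Finset.mem_singleton]
  constructor
  · rintro ⟨-, h1, h2⟩
    exact (Finset.eq_of_subset_of_card_le h2 (by omega)).symm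
  · rintro rfl
    exact ⟨hσ, hk, subset_rfl⟩

lemma numAbove_of_lt {Δ : Finset (Finset V)} {k : ℕ} {σ : Finset V} (hk : k < σ.card) :
    numAbove Δ k σ = 0 := by
  unfold numAbove
  rw [Finset.card_eq_zero, Finset.filter_eq_empty_iff]
  rintro t - ⟨h1, h2⟩
  have := Finset.card_le_card h2
  omega

/-- Counting pairs of a vertex in `D` and an edge through it: if every edge has `k` ends in `D`,
then the degrees of the vertices in `D` add up to `k` times the number of edges. -/
lemma sum_deg {C : Finset V} {Δ : Finset (Finset V)} (h : IsBipartiteComplex C Δ)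
    (D : Finset V) (k : ℕ) (hD : ∀ t ∈ Δ, t.card = 2 → (t ∩ D).card = k) :
    ∑ σ ∈ Δ.filter (fun σ => σ.card = 1 ∧ σ ⊆ D), numAbove Δ 2 σ = k * level Δ 2 := by
  have key := Finset.sum_card_bipartiteAbove_eq_sum_card_bipartiteBelow
    (s := Δ.filter (fun σ => σ.card = 1 ∧ σ ⊆ D)) (t := Δ.filter (fun t => t.card = 2))
    (fun σ t : Finset V => σ ⊆ t)
  have h1 : ∀ σ, numAbove Δ 2 σ =
      ((Δ.filter (fun t => t.card = 2)).bipartiteAbove (fun σ t : Finset V => σ ⊆ t) σ).card := by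
    intro σ
    unfold numAbove Finset.bipartiteAbove
    rw [Finset.filter_filter]
  simp only [h1]
  rw [key, level, mul_comm, ← smul_eq_mul, ← Finset.sum_const]
  refine Finset.sum_congr rfl fun t ht => ?_
  obtain ⟨ht, ht2⟩ := Finset.mem_filter.mp ht
  -- The vertices of `D` on the edge `t` are the one-point subsets of `t ∩ D`.
  have : (Δ.filter (fun σ => σ.card = 1 ∧ σ ⊆ D)).bipartiteBelow (fun σ t : Finset V => σ ⊆ t) t
      = (t ∩ D).powersetCard 1 := by
    ext σ
    simp only [Finset.mem_bipartiteBelow, Finset.mem_filter, Finset.mem_powersetCard,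
      Finset.subset_inter_iff]
    constructor
    · tauto
    · rintro ⟨⟨h2, h3⟩, h4⟩
      exact ⟨⟨h.down t ht σ h2 (Finset.card_pos.mp (by omega)), h4, h3⟩, h2⟩
  rw [this, Finset.card_powersetCard, Nat.choose_one_right, hD t ht ht2]

lemma exists_even_deg {C : Finset V} {Δ : Finset (Finset V)} (h : IsBipartiteComplex C Δ)
    (hv : level Δ 1 % 2 = 1) : ∃ σ ∈ Δ, σ.card = 1 ∧ numAbove Δ 2 σ % 2 = 0 := by
  by_contra! hcon
  have hsub : ∀ t ∈ Δ, t ⊆ Δ.sup id := fun t ht => Finset.le_sup (f := id) ht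
  have hs := sum_deg h (Δ.sup id) 2 fun t ht h2 => by
    rw [Finset.inter_eq_left.mpr (hsub t ht), h2]
  have hf : Δ.filter (fun σ => σ.card = 1 ∧ σ ⊆ Δ.sup id) = Δ.filter (fun σ => σ.card = 1) :=
    Finset.filter_congr fun t ht => and_iff_left (hsub t ht)
  rw [hf] at hs
  have hodd : Odd (∑ σ ∈ Δ.filter (fun σ => σ.card = 1), numAbove Δ 2 σ) := by
    rw [Finset.odd_sum_iff_odd_card_odd, Finset.filter_true_of_mem]
    · exact Nat.odd_iff.mpr hv
    · intro σ hσ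
      obtain ⟨h1, h2⟩ := Finset.mem_filter.mp hσ
      have := hcon σ h1 h2
      exact Nat.odd_iff.mpr (by omega)
  rw [hs] at hodd
  exact Nat.not_odd_iff_even.mpr (even_two_mul _) hodd

lemma exists_odd_deg {C : Finset V} {Δ : Finset (Finset V)} (h : IsBipartiteComplex C Δ)
    (he : level Δ 2 % 2 = 1) : ∃ σ ∈ Δ, σ.card = 1 ∧ numAbove Δ 2 σ % 2 = 1 := by
  by_contra! hcon
  have hs := sum_deg h C 1 h.color
  have heven : Even (∑ σ ∈ Δ.filter (fun σ => σ.card = 1 ∧ σ ⊆ C), numAbove Δ 2 σ) := by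
    refine Finset.even_sum _ fun σ hσ => ?_
    obtain ⟨h1, h2, -⟩ := Finset.mem_filter.mp hσ
    have := hcon σ h1 h2
    exact Nat.even_iff.mpr (by omega)
  rw [hs, one_mul, Nat.even_iff] at heven
  omega

theorem grundy_eq {C : Finset V} (Δ : Finset (Finset V)) (h : IsBipartiteComplex C Δ) :
    grundy Δ = level Δ 1 % 2 + 2 * (level Δ 2 % 2) := by
  have ih : ∀ σ ∈ Δ, grundy (takeawayMove Δ σ) =
      level (takeawayMove Δ σ) 1 % 2 + 2 * (level (takeawayMove Δ σ) 2 % 2) :=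
    fun σ hσ => grundy_eq _ (h.takeawayMove σ)
  have hmem : ∀ n, n ∈ Δ.attach.image (fun σ => grundy (takeawayMove Δ σ.1)) ↔
      ∃ σ ∈ Δ, grundy (takeawayMove Δ σ) = n := by
    intro n
    simp
  rw [grundy]
  apply mex_eq
  · rw [hmem]
    rintro ⟨σ, hσ, hg⟩
    rw [ih σ hσ] at hg
    have l1 := level_takeawayMove Δ 1 σ
    have l2 := level_takeawayMove Δ 2 σ
    rcases h.card σ hσ with hc | hc
    · have := numAbove_self hσ hc
      omega
    · have := numAbove_self hσ hc
      have := numAbove_of_lt (Δ := Δ) (k := 1) (σ := σ) (by omega)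
      omega
  · intro m hm
    rw [hmem]
    -- A vertex deletion changes the parity of `v`, and that of `e` according to the degree.
    have hvert : ∀ σ ∈ Δ, σ.card = 1 → grundy (takeawayMove Δ σ) =
        (level Δ 1 + 1) % 2 + 2 * ((level Δ 2 + numAbove Δ 2 σ) % 2) := by
      intro σ hσ hc
      rw [ih σ hσ]
      have l1 := level_takeawayMove Δ 1 σ
      have l2 := level_takeawayMove Δ 2 σ
      have := numAbove_self hσ hc
      omega
    have hedge : level Δ 2 % 2 = 1 → ∃ σ ∈ Δ, grundy (takeawayMove Δ σ) = level Δ 1 % 2 := by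
      intro he
      obtain ⟨σ, hσ⟩ : (Δ.filter (fun t => t.card = 2)).Nonempty := by
        rw [← Finset.card_pos]
        change 0 < level Δ 2
        omega
      obtain ⟨hσ, hc⟩ := Finset.mem_filter.mp hσ
      refine ⟨σ, hσ, ?_⟩
      rw [ih σ hσ]
      have l1 := level_takeawayMove Δ 1 σ
      have l2 := level_takeawayMove Δ 2 σ
      have := numAbove_self hσ hc
      have := numAbove_of_lt (Δ := Δ) (k := 1) (σ := σ) (by omega)
      omega
    -- The target `m` has its `e`-bit unchanged, or only its `e`-bit changed, or both bits changed.
    by_cases h2 : m / 2 = level Δ 2 % 2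
    · obtain ⟨σ, hσ, hc, hd⟩ := exists_even_deg h (by omega)
      exact ⟨σ, hσ, by rw [hvert σ hσ hc]; omega⟩
    · by_cases h1 : m % 2 = level Δ 1 % 2
      · obtain ⟨σ, hσ, hg⟩ := hedge (by omega)
        exact ⟨σ, hσ, by rw [hg]; omega⟩
      · obtain ⟨σ, hσ, hc, hd⟩ := exists_odd_deg h (by omega)
        exact ⟨σ, hσ, by rw [hvert σ hσ hc]; omega⟩
termination_by Δ.card
decreasing_by
  simp only [_root_.takeawayMove]
  exact Finset.card_lt_card (Finset.filter_ssubset.mpr ⟨σ, hσ, by simp⟩)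

end Complex

/-! ### Forests and their complexes -/

section Forest

variable {V : Type*} [Fintype V]

/-- Summing `e = v - 1` over the component trees; the edges are counted through the degrees, which
are the same in a component as in the whole graph. -/
lemma card_edges_add_card_components {G : SimpleGraph V} (hG : G.IsAcyclic) :
    G.edgeFinset.card + Nat.card G.ConnectedComponent = Fintype.card V := by
  have hdeg : ∀ K : G.ConnectedComponent,
      ∑ v : {v // G.connectedComponentMk v = K}, G.degree v + 2 =
        2 * Fintype.card {v // G.connectedComponentMk v = K} := by
    intro K
    have htree : (G.induce {v | G.connectedComponentMk v = K}).IsTree :=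
      hG.isTree_connectedComponent K
    have h1 := htree.card_edgeFinset
    have h2 := (G.induce {v | G.connectedComponentMk v = K}).sum_degrees_eq_twice_card_edges
    have h3 : ∀ v : {v | G.connectedComponentMk v = K},
        (G.induce {v | G.connectedComponentMk v = K}).degree v = G.degree v := by
      intro v
      apply SimpleGraph.degree_induce_of_neighborSet_subset
      intro w hw
      exact K.mem_supp_of_adj_mem_supp v.2 hw
    simp only [h3] at h2
    change ∑ v : {v | G.connectedComponentMk v = K}, G.degree v + 2 =
        2 * Fintype.card {v | G.connectedComponentMk v = K}
    rw [h2, ← h1]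
    ring
  have hsum := Finset.sum_congr (rfl : (Finset.univ : Finset G.ConnectedComponent) = _)
    (fun K _ => hdeg K)
  have hfib : ∑ K : G.ConnectedComponent, ∑ v : {v // G.connectedComponentMk v = K}, G.degree v =
      ∑ v, G.degree v := by
    convert Fintype.sum_fiberwise G.connectedComponentMk fun v => G.degree v
  rw [Finset.sum_add_distrib, hfib, G.sum_degrees_eq_twice_card_edges,
    ← Finset.mul_sum, Finset.sum_const, Finset.card_univ, smul_eq_mul, ← Fintype.card_sigma,
    Fintype.card_congr (Equiv.sigmaFiberEquiv G.connectedComponentMk)] at hsum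
  rw [Nat.card_eq_fintype_card]
  omega

variable [DecidableEq V]

lemma mem_graphComplex {G : SimpleGraph V} {t : Finset V} :
    t ∈ graphComplex G ↔ (∃ v, t = {v}) ∨ ∃ u v, G.Adj u v ∧ t = {u, v} := by
  simp [graphComplex, eq_comm]

lemma level_one_graphComplex (G : SimpleGraph V) : level (graphComplex G) 1 = Fintype.card V := by
  unfold level
  rw [← Finset.card_univ, ← Finset.card_image_of_injective Finset.univ
    (Finset.singleton_injective (α := V))]
  congr 1
  ext t
  simp only [Finset.mem_filter, mem_graphComplex, Finset.mem_image, Finset.mem_univ, true_and]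
  constructor
  · rintro ⟨-, h⟩
    obtain ⟨v, rfl⟩ := Finset.card_eq_one.mp h
    exact ⟨v, rfl⟩
  · rintro ⟨v, rfl⟩
    exact ⟨Or.inl ⟨v, rfl⟩, Finset.card_singleton v⟩

lemma level_two_graphComplex (G : SimpleGraph V) :
    level (graphComplex G) 2 = G.edgeFinset.card := by
  unfold level
  symm
  refine Finset.card_bij (fun e _ => e.toFinset) ?_ ?_ ?_
  · intro e
    induction e with | _ u v => ?_
    intro he
    have he : G.Adj u v := by simpa using he
    rw [Finset.mem_filter, mem_graphComplex, Sym2.toFinset_mk_eq]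
    exact ⟨Or.inr ⟨u, v, he, rfl⟩, Finset.card_pair he.ne⟩
  · intro e _ f _ hef
    ext x
    rw [← Sym2.mem_toFinset, ← Sym2.mem_toFinset, hef]
  · intro t ht
    rw [Finset.mem_filter, mem_graphComplex] at ht
    obtain ⟨⟨v, rfl⟩ | ⟨u, v, hadj, rfl⟩, hc⟩ := ht
    · simp at hc
    · exact ⟨s(u, v), by simpa using hadj, Sym2.toFinset_mk_eq⟩

lemma isBipartiteComplex_graphComplex {G : SimpleGraph V} (c : G.Coloring (Fin 2)) :
    IsBipartiteComplex (Finset.univ.filter (fun v => c v = 0)) (graphComplex G) := by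
  refine ⟨fun t ht => ?_, fun t ht s hs hne => ?_, fun t ht h2 => ?_⟩
  · rw [mem_graphComplex] at ht
    obtain ⟨v, rfl⟩ | ⟨u, v, hadj, rfl⟩ := ht
    · exact Or.inl (Finset.card_singleton v)
    · exact Or.inr (Finset.card_pair hadj.ne)
  · rw [mem_graphComplex] at ht ⊢
    obtain ⟨v, rfl⟩ | ⟨u, v, hadj, rfl⟩ := ht
    · exact Or.inl ⟨v, (Finset.subset_singleton_iff.mp hs).resolve_left hne.ne_empty⟩
    · have : s = ∅ ∨ s = {u} ∨ s = {v} ∨ s = {u, v} := by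
        rw [← Finset.coe_subset, Finset.coe_pair, Set.subset_pair_iff_eq] at hs
        exact_mod_cast hs
      rcases this with h | h | h | h
      · exact absurd h hne.ne_empty
      · exact Or.inl ⟨u, h⟩
      · exact Or.inl ⟨v, h⟩
      · exact Or.inr ⟨u, v, hadj, h⟩
  · rw [mem_graphComplex] at ht
    obtain ⟨v, rfl⟩ | ⟨u, v, hadj, rfl⟩ := ht
    · simp at h2
    · have hne := c.valid hadj
      have : (c u = 0 ∧ c v ≠ 0) ∨ (c u ≠ 0 ∧ c v = 0) := by omega
      rw [Finset.card_eq_one]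
      rcases this with ⟨h0, h1⟩ | ⟨h0, h1⟩
      · refine ⟨u, ?_⟩
        ext x
        simp only [Finset.mem_inter, Finset.mem_insert, Finset.mem_singleton, Finset.mem_filter,
          Finset.mem_univ, true_and]
        grind
      · refine ⟨v, ?_⟩
        ext x
        simp only [Finset.mem_inter, Finset.mem_insert, Finset.mem_singleton, Finset.mem_filter,
          Finset.mem_univ, true_and]
        grind

end Forest

/-- For a forest `G` with `v(G)` vertices and `c(G)` connected components:
if `c(G)` is even then the nim-value of graph chomp on `G` is `0` when `v(G)` is even and `3`
when `v(G)` is odd; if `c(G)` is odd then it is `2` when `v(G)` is even and `1` when `v(G)`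
is odd. -/
theorem grundy_forest {V : Type*} [Fintype V] [DecidableEq V] (G : SimpleGraph V)
    (hforest : G.IsAcyclic) :
    (Even (Nat.card G.ConnectedComponent) → Even (Fintype.card V) →
      grundy (graphComplex G) = 0) ∧
    (Even (Nat.card G.ConnectedComponent) → Odd (Fintype.card V) →
      grundy (graphComplex G) = 3) ∧
    (Odd (Nat.card G.ConnectedComponent) → Even (Fintype.card V) →
      grundy (graphComplex G) = 2) ∧
    (Odd (Nat.card G.ConnectedComponent) → Odd (Fintype.card V) →
      grundy (graphComplex G) = 1) := by
  have hg := grundy_eq _ (isBipartiteComplex_graphComplex hforest.coloringTwo)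
  have hE := card_edges_add_card_components hforest
  rw [level_one_graphComplex, level_two_graphComplex] at hg
  simp only [Nat.even_iff, Nat.odd_iff]
  refine ⟨?_, ?_, ?_, ?_⟩ <;> intro h1 h2 <;> omega
end
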